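/- arXiv:2206.08032 — 3 statements merged into one kernel-verified Lean document; each statement's English description precedes it below -/
import Mathlib

section
/- Let M be a compact metric space and let p, q ∈ M with p ≠ q, and set δ = dist(p, q). Let f = (dist_p + dist_q)/2 ∈ C_b(M, ℝ). Then ‖f − dist_p‖_∞ = ‖f − dist_q‖_∞ = δ/2, and for every r ∈ M one has ‖f − dist_r‖_∞ ≥ δ/2. Consequently the distance from f to the image Φ(M) equals δ/2, and it is attained at the two distinct points Φ(p) and Φ(q). -/
open Metric BoundedContinuousFunction

/-- The Kuratowski embedding of a compact metric space `M` into `C_b(M, ℝ)`. -/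
noncomputable def distFun (M : Type*) [MetricSpace M] [CompactSpace M] (p : M) :
    BoundedContinuousFunction M ℝ :=
  .mkOfCompact ⟨fun z => dist p z, by fun_prop⟩

/-- For `p ≠ q`, `δ = dist p q` and `f = (dist_p + dist_q)/2`, we have
`‖f − dist_p‖ = ‖f − dist_q‖ = δ/2`, every `r ∈ M` satisfies `‖f − dist_r‖ ≥ δ/2`,
so `dist(f, Φ(M)) = δ/2`, attained at the two distinct points `Φ(p) ≠ Φ(q)`. -/
theorem midpoint_two_nearest_points {M : Type*} [MetricSpace M] [CompactSpace M]
    (p q : M) (hpq : p ≠ q) (δ : ℝ) (hδ : δ = dist p q)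
    (f : BoundedContinuousFunction M ℝ)
    (hf : f = (1 / 2 : ℝ) • (distFun M p + distFun M q)) :
    ‖f - distFun M p‖ = δ / 2 ∧ ‖f - distFun M q‖ = δ / 2 ∧
      (∀ r : M, δ / 2 ≤ ‖f - distFun M r‖) ∧
      Metric.infDist f (Set.range (distFun M)) = δ / 2 ∧
      distFun M p ≠ distFun M q := by
  have hap : ∀ a z : M, distFun M a z = dist a z := fun _ _ => rfl
  have hval : ∀ r z : M, (f - distFun M r) z = (dist p z + dist q z) / 2 - dist r z := by
    intro r z
    rw [hf]
    simp only [BoundedContinuousFunction.coe_sub, BoundedContinuousFunction.coe_smul,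
      BoundedContinuousFunction.coe_add, Pi.sub_apply, Pi.add_apply, hap, smul_eq_mul]
    ring
  have hlow : ∀ r : M, δ / 2 ≤ ‖f - distFun M r‖ := by
    intro r
    have h1 := (f - distFun M r).norm_coe_le_norm r
    rw [hval, dist_self, Real.norm_eq_abs] at h1
    have h2 := le_abs_self ((dist p r + dist q r) / 2 - 0)
    have h3 := dist_triangle_right p q r
    linarith
  have hδ0 : 0 ≤ δ / 2 := by
    have := dist_nonneg (x := p) (y := q)
    linarith
  have hp : ‖f - distFun M p‖ = δ / 2 := by
    refine le_antisymm ((BoundedContinuousFunction.norm_le hδ0).2 fun z => ?_) (hlow p)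
    rw [hval, Real.norm_eq_abs, abs_le]
    have h1 := dist_triangle p q z
    have h2 := dist_triangle q p z
    rw [dist_comm q p] at h2
    constructor <;> linarith
  have hq : ‖f - distFun M q‖ = δ / 2 := by
    refine le_antisymm ((BoundedContinuousFunction.norm_le hδ0).2 fun z => ?_) (hlow q)
    rw [hval, Real.norm_eq_abs, abs_le]
    have h1 := dist_triangle p q z
    have h2 := dist_triangle q p z
    rw [dist_comm q p] at h2
    constructor <;> linarith
  refine ⟨hp, hq, hlow, le_antisymm ?_ ?_, ?_⟩
  · rw [← hp, ← dist_eq_norm]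
    exact Metric.infDist_le_dist_of_mem ⟨p, rfl⟩
  · refine (Metric.le_infDist (Set.range_nonempty_iff_nonempty.2 ⟨p⟩)).2 ?_
    rintro _ ⟨r, rfl⟩
    rw [dist_eq_norm]
    exact hlow r
  · intro h
    have h1 := DFunLike.congr_fun h q
    rw [hap, hap, dist_self] at h1
    exact hpq (dist_eq_zero.1 h1)
end

section
/- Let M be a compact connected metric space with more than one point. Then for every p ∈ M and every ε > 0 there exist f ∈ C_b(M, ℝ) and q ∈ M with q ≠ p such that ‖f − dist_p‖_∞ < ε and the distance from f to the image Φ(M) equals both ‖f − dist_p‖_∞ and ‖f − dist_q‖_∞. In other words, arbitrarily close to Φ(p) there are points of C_b(M, ℝ) with at least two distinct nearest points in Φ(M), so the reach of Φ(M) at every point p is zero. -/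
open Metric BoundedContinuousFunction

/-- For a compact connected metric space with more than one point, arbitrarily close to
`Φ(p)` there are functions `f` whose distance to `Φ(M)` is attained at (at least) two
distinct points `Φ(p)` and `Φ(q)`: the reach of the Kuratowski embedding at every
point is zero. -/
theorem reach_kuratowski_zero {M : Type*} [MetricSpace M] [CompactSpace M]
    [ConnectedSpace M] [Nontrivial M] (p : M) (ε : ℝ) (hε : 0 < ε) :
    ∃ (f : BoundedContinuousFunction M ℝ) (q : M), q ≠ p ∧
      ‖f - distFun M p‖ < ε ∧
      Metric.infDist f (Set.range (distFun M)) = ‖f - distFun M p‖ ∧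
      Metric.infDist f (Set.range (distFun M)) = ‖f - distFun M q‖ := by
  have hq : ∃ q : M, q ≠ p ∧ dist p q < ε := by
    have h1 : (nhdsWithin p {p}ᶜ).NeBot := inferInstance
    have h2 : Metric.ball p ε ∈ nhdsWithin p {p}ᶜ :=
      mem_nhdsWithin_of_mem_nhds (Metric.ball_mem_nhds p hε)
    obtain ⟨q, hq1, hq2⟩ := h1.nonempty_of_mem (Filter.inter_mem h2 self_mem_nhdsWithin)
    exact ⟨q, hq2, by rw [dist_comm]; exact hq1⟩
  obtain ⟨q, hqp, hqε⟩ := hq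
  have happ : ∀ x z : M, distFun M x z = dist x z := fun _ _ => rfl
  have hd : 0 ≤ dist p q := dist_nonneg
  let f : BoundedContinuousFunction M ℝ := (1 / 2 : ℝ) • (distFun M p + distFun M q)
  have hf : ∀ z, f z = (dist p z + dist q z) / 2 := by
    intro z
    change (1 / 2 : ℝ) * (dist p z + dist q z) = _
    ring
  have hlow : ∀ x : M, dist p q / 2 ≤ ‖f - distFun M x‖ := by
    intro x
    have h1 := (f - distFun M x).norm_coe_le_norm x
    rw [BoundedContinuousFunction.sub_apply, hf, happ, dist_self, sub_zero,
      Real.norm_eq_abs] at h1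
    have h2 := le_abs_self ((dist p x + dist q x) / 2)
    have h3 := dist_triangle_right p q x
    linarith
  have hup : ∀ x : M, (x = p ∨ x = q) → ‖f - distFun M x‖ ≤ dist p q / 2 := by
    intro x hx
    rw [BoundedContinuousFunction.norm_le (by linarith)]
    intro z
    rw [BoundedContinuousFunction.sub_apply, hf, happ, Real.norm_eq_abs, abs_le]
    have h1 := dist_triangle p q z
    have h2 := dist_triangle q p z
    rw [dist_comm q p] at h2
    rcases hx with rfl | rfl <;> constructor <;> linarith
  have hep : ‖f - distFun M p‖ = dist p q / 2 := le_antisymm (hup p (Or.inl rfl)) (hlow p)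
  have heq : ‖f - distFun M q‖ = dist p q / 2 := le_antisymm (hup q (Or.inr rfl)) (hlow q)
  have hinf : Metric.infDist f (Set.range (distFun M)) = dist p q / 2 := by
    apply le_antisymm
    · have := Metric.infDist_le_dist_of_mem (x := f) (Set.mem_range_self (f := distFun M) p)
      rwa [dist_eq_norm, hep] at this
    · rw [Metric.le_infDist (Set.range_nonempty _)]
      rintro _ ⟨x, rfl⟩
      rw [dist_eq_norm]
      exact hlow x
  exact ⟨f, q, hqp, by rw [hep]; linarith, by rw [hinf, hep], by rw [hinf, heq]⟩
end

section
/- Let M be a compact metric space, p ∈ M and δ > 0, and let f_δ = dist_p + δ ∈ C_b(M, ℝ) (i.e., the function z ↦ dist(p, z) + δ). Then ‖f_δ − dist_p‖_∞ = δ, and for every q ∈ M one has ‖f_δ − dist_q‖_∞ = δ + dist(p, q). Consequently Φ(p) is the unique nearest point to f_δ in Φ(M). -/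
open Metric BoundedContinuousFunction

/-- For `f_δ = dist_p + δ` one has `‖f_δ − dist_p‖ = δ`,
`‖f_δ − dist_q‖ = δ + dist p q` for every `q`, and `Φ(p)` is the unique nearest
point to `f_δ` in `Φ(M)`. -/
theorem translated_distFun_unique_nearest {M : Type*} [MetricSpace M] [CompactSpace M]
    (p : M) (δ : ℝ) (hδ : 0 < δ) (fδ : BoundedContinuousFunction M ℝ)
    (hf : fδ = distFun M p + BoundedContinuousFunction.const M δ) :
    ‖fδ - distFun M p‖ = δ ∧
      (∀ q : M, ‖fδ - distFun M q‖ = δ + dist p q) ∧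
      (∀ q : M, q ≠ p → ‖fδ - distFun M p‖ < ‖fδ - distFun M q‖) := by
  have key : ∀ q : M, ‖fδ - distFun M q‖ = δ + dist p q := by
    intro q
    have hv : ∀ z, (fδ - distFun M q) z = dist p z + δ - dist q z := by
      intro z
      rw [hf]
      rfl
    apply le_antisymm
    · rw [BoundedContinuousFunction.norm_le (by positivity)]
      intro z
      rw [hv, Real.norm_eq_abs, abs_le]
      have h1 := dist_triangle p q z
      have h2 := dist_triangle q p z
      rw [dist_comm q p] at h2
      constructor <;> linarith
    · have h := (fδ - distFun M q).norm_coe_le_norm q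
      rw [hv, Real.norm_eq_abs, dist_self] at h
      have h' := le_abs_self (dist p q + δ - 0)
      linarith
  have hp : ‖fδ - distFun M p‖ = δ := by rw [key, dist_self, add_zero]
  refine ⟨hp, key, ?_⟩
  intro q hq
  rw [hp, key]
  have := dist_pos.mpr hq.symm
  linarith
end
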